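/- Let κ be a regular uncountable cardinal, Γ a chain, G = (ℝ^Γ)_κ, K = ℝ((G))_κ, ι : Γ → G^{<0} an order isomorphism, and log the associated left logarithm on K given by log(t^g) = Σ_γ (−g_γ) t^{ι(γ)}. Then log is a (GA)-left logarithm (i.e., t^g > n·log(t^g) for all n ∈ ℕ and all g ∈ G^{<0}) if and only if ι(min support g) > g for all g ∈ G^{<0}. -/

import Mathlib

open Cardinal Classical

/-- The lexicographic (leading-coefficient) strict order on Hahn series. -/
def hlt {Γ : Type*} [LinearOrder Γ] (f g : HahnSeries Γ ℝ) : Prop :=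
  ∃ a, f.coeff a < g.coeff a ∧ ∀ b, b < a → f.coeff b = g.coeff b

/-- The lexicographic strict order on second-level series (elements of `ℝ((G))_κ`
for `G = (ℝ^Γ)_κ`, represented as real-valued functions on `G = ℝ^Γ`). -/
def hlt2 {Γ : Type*} [LinearOrder Γ] (F F' : HahnSeries Γ ℝ → ℝ) : Prop :=
  ∃ a, F a < F' a ∧ ∀ b, hlt b a → F b = F' b

/-! If `F` has leading exponent `m` and a positive leading coefficient, then `n • F < t^x` for all
`n` iff `x < m`: when `x < m`, the monomial has the earlier leading exponent, and when `m ≤ x`, the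
archimedean property gives a multiple of the leading coefficient of `F` that beats the monomial.
For `g < 0` the leading exponent of `log (t^g) = Σ_γ (-g_γ) t^(ι γ)` is `ι (min support g)`, with
coefficient `-g_(min support g) > 0`, so the criterion is the case `x = g`. -/

section LexFunctions

variable {Λ R : Type*} [LinearOrder Λ] [DecidableEq Λ] [PartialOrder R]
  {F : Λ → R} {m x : Λ} {u : R}

theorem nsmul_lt_single_of_lt [AddMonoid R] (hF : ∀ y < m, F y = 0) (hu : 0 < u) (hxm : x < m)
    (n : ℕ) : toLex (n • F) < toLex (Pi.single x u) := by
  refine ⟨x, fun y hy => ?_, ?_⟩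
  · simp only [Pi.toLex_apply, Pi.smul_apply, hF y (hy.trans hxm), smul_zero,
      Pi.single_eq_of_ne hy.ne]
  · simpa only [Pi.toLex_apply, Pi.smul_apply, hF x hxm, smul_zero, Pi.single_eq_same]

theorem exists_single_lt_nsmul_of_le [AddCommMonoid R] [IsOrderedCancelAddMonoid R]
    [Archimedean R] (hF : ∀ y < m, F y = 0) (hFm : 0 < F m) (hu : 0 < u) (hmx : m ≤ x) :
    ∃ n : ℕ, toLex (Pi.single x u) < toLex (n • F) := by
  obtain ⟨n, hn⟩ := exists_lt_nsmul hFm u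
  have single_le : (Pi.single x u : Λ → R) m ≤ u := by
    rw [Pi.single_apply]
    split_ifs
    exacts [le_rfl, hu.le]
  refine ⟨n, m, fun y hy => ?_, single_le.trans_lt hn⟩
  simp only [Pi.toLex_apply, Pi.smul_apply, hF y hy, smul_zero,
    Pi.single_eq_of_ne (hy.trans_le hmx).ne]

theorem forall_nsmul_lt_single_iff [AddCommMonoid R] [IsOrderedCancelAddMonoid R] [Archimedean R]
    (hF : ∀ y < m, F y = 0) (hFm : 0 < F m) (hu : 0 < u) :
    (∀ n : ℕ, toLex (n • F) < toLex (Pi.single x u)) ↔ x < m := by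
  refine ⟨fun hall => ?_, nsmul_lt_single_of_lt hF hu⟩
  by_contra! hmx
  obtain ⟨n, hn⟩ := exists_single_lt_nsmul_of_le hF hFm hu hmx
  exact (hall n).asymm hn

end LexFunctions

theorem exists_isLeast_support_coeff_neg {Γ R : Type*} [LinearOrder Γ] [Zero R] [PartialOrder R]
    {g : HahnSeries Γ R} (hg : toLex g < toLex 0) :
    ∃ γ₀, IsLeast g.support γ₀ ∧ g.coeff γ₀ < 0 := by
  obtain ⟨γ₀, hbelow, hneg⟩ := hg
  exact ⟨γ₀, ⟨hneg.ne, fun γ hγ => le_of_not_gt fun hγγ₀ => hγ (hbelow γ hγγ₀)⟩, hneg⟩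

/-- `ℓ` is the coefficient function of the series `log (t^g) = Σ_γ (-g_γ) t^(ι γ)`. The
group of exponents is replaced by an arbitrary type `Λ`, which need only carry an order when series
are compared. -/
structure IsLogMonomial {Γ Λ R : Type*} [PartialOrder Γ] [NegZeroClass R] (ι : Γ → Λ)
    (g : HahnSeries Γ R) (ℓ : Λ → R) : Prop where
  apply_eq_neg_coeff : ∀ γ, ℓ (ι γ) = -g.coeff γ
  eq_zero_of_notMem_range : ∀ y ∉ Set.range ι, ℓ y = 0

theorem IsLogMonomial.eq_zero_of_lt {Γ Λ R : Type*} [LinearOrder Γ] [Preorder Λ] [NegZeroClass R]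
    {ι : Γ → Λ} {g : HahnSeries Γ R} {ℓ : Λ → R} (hℓ : IsLogMonomial ι g ℓ) (hι : StrictMono ι)
    {γ₀ : Γ} (hγ₀ : IsLeast g.support γ₀) {y : Λ} (hy : y < ι γ₀) : ℓ y = 0 := by
  by_cases hrange : y ∈ Set.range ι
  · obtain ⟨γ, rfl⟩ := hrange
    have hγ : g.coeff γ = 0 :=
      by_contra fun hne => (hγ₀.2 hne).not_gt (hι.lt_iff_lt.1 hy)
    rw [hℓ.apply_eq_neg_coeff, hγ, neg_zero]
  · exact hℓ.eq_zero_of_notMem_range y hrange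

theorem main_lemma_GA_criterion_general {Γ Λ R : Type*} [LinearOrder Γ] [LinearOrder Λ]
    [DecidableEq Λ] [AddCommGroup R] [PartialOrder R] [IsOrderedAddMonoid R] [Archimedean R]
    {ι : Γ → Λ} (hι : StrictMono ι) {g : HahnSeries Γ R} (hg : toLex g < toLex 0)
    {ℓ : Λ → R} (hℓ : IsLogMonomial ι g ℓ) (x : Λ) {u : R} (hu : 0 < u) :
    (∀ n : ℕ, toLex (n • ℓ) < toLex (Pi.single x u)) ↔
      ∀ γ₀, IsLeast g.support γ₀ → x < ι γ₀ := by
  obtain ⟨γ₀, hmin, hneg⟩ := exists_isLeast_support_coeff_neg hg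
  have hpos : 0 < ℓ (ι γ₀) := by rwa [hℓ.apply_eq_neg_coeff, neg_pos]
  rw [forall_nsmul_lt_single_iff (fun _ => hℓ.eq_zero_of_lt hι hmin) hpos hu]
  exact ⟨fun hx _ hγ => hmin.unique hγ ▸ hx, fun hall => hall γ₀ hmin⟩

section LexOrders

variable {Γ : Type*} [LinearOrder Γ]

theorem hlt_iff_toLex_lt (f g : HahnSeries Γ ℝ) : hlt f g ↔ toLex f < toLex g :=
  exists_congr fun _ => and_comm

theorem hlt2_iff_toLex_lt (F F' : HahnSeries Γ ℝ → ℝ) :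
    hlt2 F F' ↔ toLex (F ∘ ofLex) < toLex (F' ∘ ofLex) :=
  exists_congr fun a => and_comm.trans <|
    and_congr_left' <| forall_congr' fun b => imp_congr_left (hlt_iff_toLex_lt b a)

theorem hlt2_mul_indicator_iff (n : ℕ) (F : HahnSeries Γ ℝ → ℝ) (g : HahnSeries Γ ℝ) :
    hlt2 (fun h => n * F h) (fun h => if h = g then 1 else 0) ↔
      toLex (n • (F ∘ ofLex)) < toLex (Pi.single (toLex g) 1) := by
  have hmul : (fun h => n * F h) ∘ ofLex = n • (F ∘ ofLex) := by
    ext y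
    simp only [Function.comp_apply, Pi.smul_apply, nsmul_eq_mul]
  have hsingle : (fun h => if h = g then (1 : ℝ) else 0) ∘ ofLex = Pi.single (toLex g) 1 := by
    ext y
    rw [Function.comp_apply, Pi.single_apply]
    exact if_congr (Equiv.eq_symm_apply ofLex).symm rfl rfl
  rw [hlt2_iff_toLex_lt, hmul, hsingle]

theorem forall_hlt2_mul_indicator_iff {ι : Γ → HahnSeries Γ ℝ}
    (hι : ∀ γ γ', γ < γ' → hlt (ι γ) (ι γ')) {g : HahnSeries Γ ℝ} (hg : hlt g 0)
    {ℓ : HahnSeries Γ ℝ → ℝ} (hℓ : IsLogMonomial ι g ℓ) :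
    (∀ n : ℕ, hlt2 (fun h => n * ℓ h) (fun h => if h = g then 1 else 0)) ↔
      ∀ γ₀, IsLeast g.support γ₀ → hlt g (ι γ₀) := by
  simp only [hlt2_mul_indicator_iff, hlt_iff_toLex_lt] at hι hg ⊢
  have hℓ_lex : IsLogMonomial (toLex ∘ ι) g (ℓ ∘ ofLex) :=
    ⟨hℓ.apply_eq_neg_coeff, hℓ.eq_zero_of_notMem_range⟩
  exact main_lemma_GA_criterion_general (ι := toLex ∘ ι) hι hg hℓ_lex (toLex g) one_pos

end LexOrders

/-- **The Main Lemma: growth axiom criterion.**  Let `κ` be regular uncountable, `Γ` a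
chain, `G = (ℝ^Γ)_κ`, `K = ℝ((G))_κ`, `ι : Γ → G^{<0}` an order isomorphism, and `log`
the associated left logarithm `log(t^g) = Σ_γ (−g_γ) t^{ι(γ)}`.  Then `log` is a
(GA)-left logarithm, i.e. `t^g > n·log(t^g)` in `K` for all `n ∈ ℕ` and `g ∈ G^{<0}`
(here `t^g` is the second-level monomial, the indicator of `g`), if and only if
`ι(min support g) > g` for all `g ∈ G^{<0}`. -/
theorem main_lemma_GA_criterion
    (κ : Cardinal) (hreg : κ.IsRegular) (hunc : ℵ₀ < κ)
    (Γ : Type*) [LinearOrder Γ] (ι : Γ → HahnSeries Γ ℝ)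
    (hι₁ : ∀ γ, #(ι γ).support < κ ∧ hlt (ι γ) 0)
    (hι₂ : ∀ γ γ', γ < γ' ↔ hlt (ι γ) (ι γ'))
    (hι₃ : ∀ g : HahnSeries Γ ℝ, #g.support < κ → hlt g 0 → ∃ γ, ι γ = g)
    (L : {g : HahnSeries Γ ℝ // #g.support < κ} → (HahnSeries Γ ℝ → ℝ))
    (hL₁ : ∀ g γ, L g (ι γ) = -(g.1.coeff γ))
    (hL₂ : ∀ g h, h ∉ Set.range ι → L g h = 0) :
    -- (GA): for all n ∈ ℕ and g ∈ G^{<0}, n·log(t^g) < t^g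
    (∀ (n : ℕ) (g : {g : HahnSeries Γ ℝ // #g.support < κ}), hlt g.1 0 →
        hlt2 (fun h => n * L g h) (fun h => if h = g.1 then 1 else 0)) ↔
    -- iff ι(min support g) > g for all g ∈ G^{<0}
    (∀ g : {g : HahnSeries Γ ℝ // #g.support < κ}, hlt g.1 0 →
        ∀ γ₀, g.1.coeff γ₀ ≠ 0 → (∀ γ, g.1.coeff γ ≠ 0 → γ₀ ≤ γ) →
          hlt g.1 (ι γ₀)) := by
  have key (g hg) := forall_hlt2_mul_indicator_iff (fun γ γ' => (hι₂ γ γ').1) (g := g.1) hg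
    ⟨hL₁ g, hL₂ g⟩
  exact ⟨fun hGA g hg γ₀ hne hle => (key g hg).1 (fun n => hGA n g hg) γ₀ ⟨hne, hle⟩,
    fun hmin n g hg => (key g hg).2 (fun γ₀ hγ₀ => hmin g hg γ₀ hγ₀.1 hγ₀.2) n⟩
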